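/- Let i, j be natural numbers and let w be a 7/3-power-free finite binary word with |w| = (7 + 2j)·2^i − 1. Let a be a letter of Σ₂. Then the word w a w contains a 7/3-power x as a subword with |x| ≤ 7·2^i. -/

import Mathlib

/-- The Thue–Morse morphism `μ` on a single letter (`false` = 0, `true` = 1):
`μ(0) = 01`, `μ(1) = 10`. -/
def muLetter : Bool → List Bool
  | false => [false, true]
  | true  => [true, false]

/-- The Thue–Morse morphism `μ` on binary words. -/
def mu (w : List Bool) : List Bool := (w.map muLetter).flatten

/-- `z` is a `β`-power (for a rational `β`): `z = xⁿx'` with `x'` a prefix of `x`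
and `n + |x'|/|x| = β`. -/
def IsPower (β : ℚ) (z : List Bool) : Prop :=
  ∃ (n : ℕ) (x x' : List Bool), x ≠ [] ∧ x' <+: x ∧
    z = (List.replicate n x).flatten ++ x' ∧
    (n : ℚ) + (x'.length : ℚ) / (x.length : ℚ) = β

/-- The finite word `w` is `α`-power-free: no subword (contiguous factor) of `w`
is a `β`-power for any rational `β ≥ α`. -/
def PowerFree (α : ℝ) (w : List Bool) : Prop :=
  ∀ z : List Bool, z <:+: w → ∀ β : ℚ, α ≤ (β : ℝ) → ¬ IsPower β z

/-- The finite word `w` contains an `α`-power: some subword of `w` is a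
`β`-power for some rational `β ≥ α`. -/
def ContainsPower (α : ℝ) (w : List Bool) : Prop :=
  ∃ z : List Bool, z <:+: w ∧ ∃ β : ℚ, α ≤ (β : ℝ) ∧ IsPower β z

/-- `z` is a (finite) subword of the infinite word `w : ℕ → Bool`. -/
def InfSubword (z : List Bool) (w : ℕ → Bool) : Prop :=
  ∃ i : ℕ, z = (List.range z.length).map fun k => w (i + k)

/-- The infinite word `w` is `α`-power-free. -/
def PowerFreeInf (α : ℝ) (w : ℕ → Bool) : Prop :=
  ∀ z : List Bool, InfSubword z w → ∀ β : ℚ, α ≤ (β : ℝ) → ¬ IsPower β z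

/-- The infinite word `w` contains an `α`-power. -/
def ContainsPowerInf (α : ℝ) (w : ℕ → Bool) : Prop :=
  ∃ z : List Bool, InfSubword z w ∧ ∃ β : ℚ, α ≤ (β : ℝ) ∧ IsPower β z

/-- The length-`n` prefix of an infinite word. -/
def wordPrefix (w : ℕ → Bool) (n : ℕ) : List Bool := (List.range n).map w

/-- `h : Σ₂* → Σ₂*` is a morphism. -/
def IsMorphism (h : List Bool → List Bool) : Prop :=
  ∀ x y : List Bool, h (x ++ y) = h x ++ h y

/-- A morphism is non-erasing if it erases neither letter. -/
def NonErasing (h : List Bool → List Bool) : Prop :=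
  h [false] ≠ [] ∧ h [true] ≠ []

/-- The infinite word `u` is the image of the infinite word `w` under the morphism `h`
(obtained by concatenating the images of the letters of `w`): every `h(w[0..n))` is a
prefix of `u`, and these prefixes exhaust `u`. -/
def IsMorphImage (h : List Bool → List Bool) (w u : ℕ → Bool) : Prop :=
  (∀ n : ℕ, wordPrefix u (h (wordPrefix w n)).length = h (wordPrefix w n)) ∧
  ∀ m : ℕ, ∃ n : ℕ, m ≤ (h (wordPrefix w n)).length

/-- The complementation morphism `E` : `E(0) = 1`, `E(1) = 0`. -/
def eMorph (w : List Bool) : List Bool := w.map fun b => !b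

/-- The Thue–Morse word `μ^ω(0)` (`tm n` = parity of the binary digit sum of `n`). -/
def tm (n : ℕ) : Bool := (Nat.digits 2 n).sum % 2 == 1

/-- `μ³(0) = 01101001`. -/
def w01101001 : List Bool := [false, true, true, false, true, false, false, true]

/-- `μ³(1) = 10010110`. -/
def w10010110 : List Bool := [true, false, false, true, false, true, true, false]

/-!
The word `u = w a w` has period `N = |w| + 1` and length `2 N - 1`. If `u` has no power of exponent
at least `7/3` and length at most `7`, then all its doubled letters, away from the two ends, start
at positions of the same parity. When `N ≥ 7` is odd, shifting a doubled letter by the period flips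
this parity, which is impossible. When `N` is even, the parity constraint makes a factor of `u` of
length `2 N - 2` the image under `μ` of a word of length `N - 1` with period `N / 2`. As `μ` doubles
lengths and preserves exponents, induction on the exponent of `2` in `N` finishes the proof.
-/

/-- The word `w` contains a power of exponent at least `α` whose length is at most `m`. -/
def ContainsPowerOfLengthLE (α : ℝ) (m : ℕ) (w : List Bool) : Prop :=
  ∃ x : List Bool, x <:+: w ∧ x.length ≤ m ∧ ∃ β : ℚ, α ≤ (β : ℝ) ∧ IsPower β x

lemma ContainsPowerOfLengthLE.mono {α : ℝ} {m n : ℕ} {v w : List Bool} (hmn : m ≤ n)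
    (hvw : v <:+: w) : ContainsPowerOfLengthLE α m v → ContainsPowerOfLengthLE α n w := by
  rintro ⟨x, hx, hxm, hpow⟩
  exact ⟨x, hx.trans hvw, hxm.trans hmn, hpow⟩

lemma mu_nil : mu [] = [] := rfl

lemma mu_cons (a : Bool) (w : List Bool) : mu (a :: w) = a :: (!a) :: mu w := by
  cases a <;> rfl

lemma mu_append (v w : List Bool) : mu (v ++ w) = mu v ++ mu w := by
  simp [mu]

lemma length_mu (w : List Bool) : (mu w).length = 2 * w.length := by
  induction w with
  | nil => rfl
  | cons a w ih => simp only [mu_cons, List.length_cons, ih]; ring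

lemma mu_flatten (l : List (List Bool)) : mu l.flatten = (l.map mu).flatten := by
  induction l with
  | nil => rfl
  | cons w l ih => simp only [List.flatten_cons, mu_append, ih, List.map_cons]

lemma take_mu (n : ℕ) (w : List Bool) : (mu w).take (2 * n) = mu (w.take n) := by
  induction w generalizing n with
  | nil => simp [mu_nil]
  | cons a w ih =>
    cases n with
    | zero => rfl
    | succ n => simp [mu_cons, Nat.mul_succ, ih]

lemma mu_isPrefix_mu_iff {v w : List Bool} : mu v <+: mu w ↔ v <+: w := by
  induction v generalizing w with
  | nil => simp [mu_nil]
  | cons a v ih =>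
    cases w with
    | nil => simp [mu_cons, mu_nil]
    | cons b w => simp +contextual [mu_cons, List.cons_prefix_cons, ih]

lemma mu_isInfix_mu {v w : List Bool} : v <:+: w → mu v <:+: mu w := by
  rintro ⟨s, t, rfl⟩
  exact ⟨mu s, mu t, by simp only [mu_append]⟩

lemma hasPeriod_of_mu {w : List Bool} {p : ℕ} (h : (mu w).HasPeriod (2 * p)) :
    w.HasPeriod p := by
  rwa [List.HasPeriod, take_mu, ← mu_append, mu_isPrefix_mu_iff] at h

lemma mu_map_range {f : ℕ → Bool} {n : ℕ} (hf : ∀ k < n, f (2 * k + 1) = !f (2 * k)) :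
    mu ((List.range n).map fun k ↦ f (2 * k)) = (List.range (2 * n)).map f := by
  induction n with
  | zero => rfl
  | succ n ih =>
    rw [List.range_succ, List.map_append, mu_append, ih fun k hk ↦ hf k (by omega), Nat.mul_succ,
      List.range_succ, List.range_succ, List.map_append, List.map_append, List.append_assoc]
    simp only [List.map_cons, List.map_nil, mu_cons, mu_nil, hf n (by omega), List.cons_append,
      List.nil_append]

lemma IsPower.map_mu {β : ℚ} {x : List Bool} : IsPower β x → IsPower β (mu x) := by
  rintro ⟨n, y, y', hy, hy', rfl, rfl⟩
  refine ⟨n, mu y, mu y', ?_, mu_isPrefix_mu_iff.2 hy', ?_, ?_⟩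
  · rwa [← List.length_pos_iff, length_mu, Nat.mul_pos_iff_of_pos_left two_pos,
      List.length_pos_iff]
  · rw [mu_append, mu_flatten, List.map_replicate]
  · simp only [length_mu, Nat.cast_mul, Nat.cast_ofNat]
    rw [mul_div_mul_left _ _ two_ne_zero]

lemma ContainsPowerOfLengthLE.map_mu {α : ℝ} {m : ℕ} {w : List Bool} :
    ContainsPowerOfLengthLE α m w → ContainsPowerOfLengthLE α (2 * m) (mu w) := by
  rintro ⟨x, hxw, hxm, β, hβ, hx⟩
  exact ⟨mu x, mu_isInfix_mu hxw, by rw [length_mu]; omega, β, hβ, hx.map_mu⟩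

lemma isPower_append_append {x y : List Bool} (hx : x ≠ []) (hy : y <+: x) :
    IsPower (2 + y.length / x.length) (x ++ x ++ y) :=
  ⟨2, x, y, hx, hy, by simp [List.replicate], by norm_num⟩

lemma map_range_getElem!_isInfix {α : Type*} [Inhabited α] {w : List α} {p n : ℕ}
    (h : p + n ≤ w.length) : (List.range n).map (fun k ↦ w[p + k]!) <:+: w := by
  have heq : (List.range n).map (fun k ↦ w[p + k]!) = (w.drop p).take n := by
    apply List.ext_getElem
    · rw [List.length_map, List.length_range, List.length_take, List.length_drop]
      omega
    · intro k hk _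
      have : k < n := by simpa using hk
      simp [List.getElem?_eq_getElem (show p + k < w.length by omega)]
  rw [heq]
  exact (List.take_prefix n _).isInfix.trans (List.drop_suffix p w).isInfix

lemma getElem!_add_of_hasPeriod {α : Type*} [Inhabited α] {w : List α} {p n : ℕ}
    (h : w.HasPeriod p) (hn : n + p < w.length) : w[n + p]! = w[n]! := by
  simp only [List.getElem!_eq_getElem?_getD,
    List.hasPeriod_iff_getElem?.1 h n (by omega)]

/-- A doubled letter of `w` starts at position `p`. Positions beyond the end of `w` read as the
default letter, so this is meaningful only for `p + 1 < w.length`. -/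
def IsDoubledAt {α : Type*} [Inhabited α] (w : List α) (p : ℕ) : Prop := w[p]! = w[p + 1]!

lemma not_isDoubledAt_iff {w : List Bool} {p : ℕ} : ¬ IsDoubledAt w p ↔ w[p + 1]! = !w[p]! := by
  rw [IsDoubledAt, Bool.eq_not, ne_comm]

lemma isDoubledAt_add_iff_of_hasPeriod {α : Type*} [Inhabited α] {w : List α} {p n : ℕ}
    (h : w.HasPeriod p) (hn : n + p + 1 < w.length) :
    IsDoubledAt w (n + p) ↔ IsDoubledAt w n := by
  rw [IsDoubledAt, add_right_comm n p 1, getElem!_add_of_hasPeriod h (n := n) (by omega),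
    getElem!_add_of_hasPeriod h (n := n + 1) (by omega), IsDoubledAt]

lemma hasPeriod_append_append {α : Type*} (v w : List α) :
    (w ++ v ++ w).HasPeriod (w ++ v).length := by
  rw [List.HasPeriod, List.take_left, List.prefix_append_right_inj, List.append_assoc]
  exact List.prefix_append _ _

section ShortPowerFree

variable {w : List Bool} (hw : ¬ ContainsPowerOfLengthLE (7 / 3) 7 w)

include hw

lemma not_append_self_append_isInfix {x y : List Bool} (hx : x ≠ []) (hy : y <+: x)
    (hlen : (x ++ x ++ y).length ≤ 7) (hexp : x.length ≤ 3 * y.length) :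
    ¬ x ++ x ++ y <:+: w := by
  intro h
  refine hw ⟨_, h, hlen, _, ?_, isPower_append_append hx hy⟩
  have hpos : (0 : ℝ) < x.length := by exact_mod_cast List.length_pos_iff.2 hx
  have : (x.length : ℝ) ≤ 3 * y.length := by exact_mod_cast hexp
  push_cast
  rw [← sub_le_iff_le_add', le_div_iff₀ hpos]
  linarith

lemma IsDoubledAt.not_add_one {p : ℕ} (hp : p + 3 ≤ w.length) (h : IsDoubledAt w p) :
    ¬ IsDoubledAt w (p + 1) := by
  intro h'
  rw [IsDoubledAt] at h h'
  have hfactor : [w[p]!, w[p + 1]!, w[p + 2]!] <:+: w :=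
    map_range_getElem!_isInfix (n := 3) hp
  rw [← h', ← h] at hfactor
  exact not_append_self_append_isInfix hw (x := [w[p]!]) (y := [w[p]!])
    (by simp) (by simp) (by simp) (by simp) hfactor

lemma exists_isDoubledAt {p : ℕ} (hp : p + 5 ≤ w.length) :
    ∃ q, p ≤ q ∧ q ≤ p + 3 ∧ IsDoubledAt w q := by
  by_contra! hne
  have h1 : w[p + 1]! = !w[p]! := not_isDoubledAt_iff.1 (hne p (by omega) (by omega))
  have h2 : w[p + 2]! = !w[p + 1]! := not_isDoubledAt_iff.1 (hne (p + 1) (by omega) (by omega))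
  have h3 : w[p + 3]! = !w[p + 2]! := not_isDoubledAt_iff.1 (hne (p + 2) (by omega) (by omega))
  have h4 : w[p + 4]! = !w[p + 3]! := not_isDoubledAt_iff.1 (hne (p + 3) (by omega) (by omega))
  have hfactor : [w[p]!, w[p + 1]!, w[p + 2]!, w[p + 3]!, w[p + 4]!] <:+: w :=
    map_range_getElem!_isInfix (n := 5) hp
  simp only [h4, h3, h2, h1, Bool.not_not] at hfactor
  exact not_append_self_append_isInfix hw (x := [w[p]!, !w[p]!]) (y := [w[p]!])
    (by simp) (by simp) (by simp) (by simp) hfactor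

lemma IsDoubledAt.not_add_three {p : ℕ} (hp0 : 1 ≤ p) (hp : p + 6 ≤ w.length)
    (h : IsDoubledAt w p) : ¬ IsDoubledAt w (p + 3) := by
  intro h'
  obtain ⟨q, rfl⟩ := Nat.exists_eq_add_of_le' hp0
  have h1 : w[q + 1]! = !w[q]! :=
    not_isDoubledAt_iff.1 fun e ↦ e.not_add_one hw (by omega) h
  have h3 : w[q + 3]! = !w[q + 2]! := not_isDoubledAt_iff.1 (h.not_add_one hw (by omega))
  have h4 : w[q + 4]! = !w[q + 3]! :=
    not_isDoubledAt_iff.1 fun e ↦ e.not_add_one hw (by omega) h'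
  have h6 : w[q + 6]! = !w[q + 5]! := not_isDoubledAt_iff.1 (h'.not_add_one hw (by omega))
  have h2 : w[q + 1]! = w[q + 2]! := h
  have h5 : w[q + 4]! = w[q + 5]! := h'
  have hfactor : [w[q]!, w[q + 1]!, w[q + 2]!, w[q + 3]!, w[q + 4]!, w[q + 5]!, w[q + 6]!] <:+: w :=
    map_range_getElem!_isInfix (n := 7) (by omega)
  simp only [h6, ← h5, h4, h3, ← h2, h1, Bool.not_not] at hfactor
  exact not_append_self_append_isInfix hw (x := [w[q]!, !w[q]!, !w[q]!]) (y := [w[q]!])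
    (by simp) (by simp) (by simp) (by simp) hfactor

-- The next doubled letter after the one at `p` starts at `p + 2` or `p + 4`.
lemma IsDoubledAt.mod_two_eq {p q : ℕ} (hp : 1 ≤ p) (hpq : p ≤ q) (hq : q + 3 ≤ w.length)
    (hwp : IsDoubledAt w p) (hwq : IsDoubledAt w q) : p % 2 = q % 2 := by
  obtain hfar | hnear := Nat.lt_or_ge (p + 3) q
  · obtain ⟨r, hpr, hrp, hwr⟩ := exists_isDoubledAt hw (p := p + 1) (by omega)
    have hrq : r % 2 = q % 2 := hwr.mod_two_eq (by omega) (by omega) hq hwq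
    have hr1 : r ≠ p + 1 := by
      rintro rfl
      exact hwp.not_add_one hw (by omega) hwr
    have hr3 : r ≠ p + 3 := by
      rintro rfl
      exact hwp.not_add_three hw hp (by omega) hwr
    omega
  · have hq1 : q ≠ p + 1 := by
      rintro rfl
      exact hwp.not_add_one hw (by omega) hwq
    have hq3 : q ≠ p + 3 := by
      rintro rfl
      exact hwp.not_add_three hw hp (by omega) hwq
    omega
termination_by q - p

lemma exists_parity_forall_not_isDoubledAt :
    ∃ ε < 2, ∀ p, 1 ≤ p → p + 3 ≤ w.length → p % 2 = ε → ¬ IsDoubledAt w p := by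
  by_cases hd : ∃ p, 1 ≤ p ∧ p + 3 ≤ w.length ∧ IsDoubledAt w p
  · obtain ⟨p, hp, hpw, hwp⟩ := hd
    refine ⟨(p + 1) % 2, Nat.mod_lt _ two_pos, fun q hq hqw hpar hwq ↦ ?_⟩
    have : p % 2 = q % 2 := by
      obtain hpq | hqp := le_total p q
      · exact hwp.mod_two_eq hw hp hpq hqw hwq
      · exact (hwq.mod_two_eq hw hq hqp hpw hwp).symm
    omega
  · push Not at hd
    exact ⟨0, two_pos, fun p hp hpw _ ↦ hd p hp hpw⟩

lemma exists_parity_forall_not_isDoubledAt_of_hasPeriod {N : ℕ} (hN : 4 ≤ N) (heven : Even N)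
    (hlen : w.length + 1 = 2 * N) (hper : w.HasPeriod N) :
    ∃ ε < 2, ∀ p, p + 1 < w.length → p % 2 = ε → ¬ IsDoubledAt w p := by
  obtain ⟨ε, hε, hne⟩ := exists_parity_forall_not_isDoubledAt hw
  refine ⟨ε, hε, fun p hp hpar ↦ ?_⟩
  have hmod : N % 2 = 0 := Nat.even_iff.1 heven
  obtain rfl | hp0 := Nat.eq_zero_or_pos p
  · rw [← isDoubledAt_add_iff_of_hasPeriod hper (by omega)]
    exact hne (0 + N) (by omega) (by omega) (by omega)
  obtain hinner | hlast := Nat.lt_or_ge (p + 2) w.length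
  · exact hne p hp0 hinner hpar
  · obtain ⟨n, rfl⟩ := Nat.exists_eq_add_of_le' (show N ≤ p by omega)
    rw [isDoubledAt_add_iff_of_hasPeriod hper hp]
    exact hne n (by omega) (by omega) (by omega)

lemma exists_mu_isInfix_of_hasPeriod {M : ℕ} (hM : 2 ≤ M)
    (hlen : w.length + 1 = 2 * (2 * M)) (hper : w.HasPeriod (2 * M)) :
    ∃ u : List Bool, u.length + 1 = 2 * M ∧ u.HasPeriod M ∧ mu u <:+: w := by
  obtain ⟨ε, hε, hne⟩ :=
    exists_parity_forall_not_isDoubledAt_of_hasPeriod hw (by omega) (even_two_mul M) hlen hper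
  have hmu := mu_map_range (f := fun k ↦ w[ε + k]!) (n := 2 * M - 1) fun k hk ↦
    not_isDoubledAt_iff.1 (hne (ε + 2 * k) (by omega) (by omega))
  have hfactor := map_range_getElem!_isInfix (w := w) (p := ε) (n := 2 * (2 * M - 1)) (by omega)
  rw [← hmu] at hfactor
  refine ⟨_, ?_, hasPeriod_of_mu (hper.infix hfactor), hfactor⟩
  rw [List.length_map, List.length_range]
  omega

end ShortPowerFree

lemma containsPowerOfLengthLE_seven_of_hasPeriod_odd {N : ℕ} {w : List Bool} (hN : 7 ≤ N)
    (hodd : Odd N) (hlen : w.length + 1 = 2 * N) (hper : w.HasPeriod N) :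
    ContainsPowerOfLengthLE (7 / 3) 7 w := by
  by_contra hw
  have hmod : N % 2 = 1 := Nat.odd_iff.1 hodd
  have hshift {p : ℕ} (hp : p + 2 < N) (h : IsDoubledAt w p) : IsDoubledAt w (p + N) :=
    (isDoubledAt_add_iff_of_hasPeriod hper (by omega)).2 h
  have hinner {p : ℕ} (hp : 1 ≤ p) (hpN : p + 4 ≤ N) : ¬ IsDoubledAt w p := fun h ↦ by
    have : p % 2 = (p + N) % 2 :=
      h.mod_two_eq hw hp (by omega) (by omega) (hshift (by omega) h)
    omega
  have hdoubled0 : IsDoubledAt w 0 := by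
    obtain ⟨p, -, hp, hwp⟩ := exists_isDoubledAt hw (p := 0) (by omega)
    obtain rfl | hp0 := Nat.eq_zero_or_pos p
    · exact hwp
    · exact absurd hwp (hinner hp0 (by omega))
  have hdoubled4 : IsDoubledAt w 4 := by
    obtain ⟨p, hp1, hp, hwp⟩ := exists_isDoubledAt hw (p := 1) (by omega)
    obtain rfl | hp4 := eq_or_ne p 4
    · exact hwp
    · exact absurd hwp (hinner hp1 (by omega))
  have : 4 % 2 = (0 + N) % 2 :=
    hdoubled4.mod_two_eq hw (by omega) (by omega) (by omega) (hshift (by omega) hdoubled0)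
  omega

theorem containsPowerOfLengthLE_of_hasPeriod {m : ℕ} (hm : 7 ≤ m) (hodd : Odd m) (i : ℕ)
    {w : List Bool} (hlen : w.length + 1 = 2 * (m * 2 ^ i)) (hper : w.HasPeriod (m * 2 ^ i)) :
    ContainsPowerOfLengthLE (7 / 3) (7 * 2 ^ i) w := by
  induction i generalizing w with
  | zero =>
    rw [pow_zero, mul_one] at hlen hper ⊢
    exact containsPowerOfLengthLE_seven_of_hasPeriod_odd hm hodd hlen hper
  | succ i ih =>
    rw [pow_succ', mul_left_comm m] at hlen hper
    rw [pow_succ', mul_left_comm 7]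
    have hperiod : m ≤ m * 2 ^ i := Nat.le_mul_of_pos_right m (by positivity)
    have hpow : 1 ≤ 2 ^ i := Nat.one_le_two_pow
    by_cases hw : ContainsPowerOfLengthLE (7 / 3) 7 w
    · exact hw.mono (by omega) List.infix_rfl
    · obtain ⟨u, hulen, huper, hu⟩ := exists_mu_isInfix_of_hasPeriod hw (by omega) hlen hper
      exact (ih hulen huper).map_mu.mono le_rfl hu

theorem waw_contains_power_seven_general (i j : ℕ) (w : List Bool)
    (hlen : w.length = (7 + 2 * j) * 2 ^ i - 1) (a : Bool) :
    ContainsPowerOfLengthLE (7 / 3) (7 * 2 ^ i) (w ++ [a] ++ w) := by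
  have hpos : 0 < (7 + 2 * j) * 2 ^ i := by positivity
  have hperiod : (w ++ [a]).length = (7 + 2 * j) * 2 ^ i := by
    rw [List.length_append, List.length_singleton, hlen, Nat.sub_add_cancel hpos]
  refine containsPowerOfLengthLE_of_hasPeriod (m := 7 + 2 * j) (by omega) ⟨j + 3, by ring⟩ i ?_ ?_
  · rw [List.length_append, hperiod]
    omega
  · exact hperiod ▸ hasPeriod_append_append [a] w

/-- If `w` is `7/3`-power-free with `|w| = (7+2j)·2^i − 1` and `a` is a letter, then
`w a w` contains a `7/3`-power `x` with `|x| ≤ 7·2^i`. -/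
theorem waw_contains_power_seven (i j : ℕ) (w : List Bool)
    (hw : PowerFree (7/3 : ℝ) w) (hlen : w.length = (7 + 2 * j) * 2 ^ i - 1)
    (a : Bool) :
    ∃ x : List Bool, x <:+: (w ++ [a] ++ w) ∧ x.length ≤ 7 * 2 ^ i ∧
      ∃ β : ℚ, (7/3 : ℝ) ≤ (β : ℝ) ∧ IsPower β x :=
  waw_contains_power_seven_general i j w hlen a
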